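/- Let G be a finite 3-group which is semi-3-abelian, generated by elements a₁, …, a_n with |G/Φ(G)| = 3^n (where Φ(G) is the Frattini subgroup). If for some index i and some natural number m the element x = a_i^m lies in Ω₁(G), then x ∈ Z_n(G), the n-th term of the upper central series of G. -/

import Mathlib

/-!
Let `x` lie in an abelian normal subgroup `N` on which every `g : G` acts with `(g - 1)² = 0`. Then
`g⁻¹ = 2 - g` on `N`, and comparing `(gh)⁻¹ = 2 - gh` with `h⁻¹g⁻¹ = (2 - h)(2 - g)` shows that the
operators `g - 1` anticommute. So if `x` commutes with all generators outside a set `T` and `t ∈ T`,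
then `⁅t, x⁆` commutes with all generators outside `T \ {t}`, and induction on `T` gives
`x ∈ Z_{|T| + 1}(G)`.

In a semi-3-abelian group, `x ^ 3 = 1` forces `(x * g) ^ 3 = g ^ 3`, that is, the product of `x`,
`g x g⁻¹` and `g² x g⁻²` is trivial. Together with the same relation for `g⁻¹` this makes the normal
closure of `x` abelian. It has exponent dividing `3`, so there `(g - 1)² = 1 + g + g² = 0`.
-/

open scoped commutatorElement IsMulCommutative

section RingValuedHom

variable {G R : Type*} [Group G] [Ring R] {ρ : G →* R}

lemma map_inv_eq_two_sub_of_sub_one_sq_eq_zero {g : G} (hg : (ρ g - 1) ^ 2 = 0) :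
    ρ g⁻¹ = 2 - ρ g := by
  have hinv : ρ g * ρ g⁻¹ = 1 := by rw [← map_mul, mul_inv_cancel, map_one]
  calc ρ g⁻¹ = (ρ g - 1) ^ 2 * ρ g⁻¹ - ρ g * (ρ g * ρ g⁻¹) + 2 * (ρ g * ρ g⁻¹) := by noncomm_ring
    _ = 2 - ρ g := by rw [hg, hinv, zero_mul, mul_one, mul_one, zero_sub, neg_add_eq_sub]

lemma sub_one_mul_sub_one_anticomm (hρ : ∀ g, (ρ g - 1) ^ 2 = 0) (g h : G) :
    (ρ g - 1) * (ρ h - 1) + (ρ h - 1) * (ρ g - 1) = 0 := by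
  have hgh : ρ h⁻¹ * ρ g⁻¹ = 2 - ρ g * ρ h := by
    rw [← map_mul, ← map_mul, ← mul_inv_rev, map_inv_eq_two_sub_of_sub_one_sq_eq_zero (hρ _)]
  rw [map_inv_eq_two_sub_of_sub_one_sq_eq_zero (hρ g),
    map_inv_eq_two_sub_of_sub_one_sq_eq_zero (hρ h)] at hgh
  calc (ρ g - 1) * (ρ h - 1) + (ρ h - 1) * (ρ g - 1)
      = (2 - ρ h) * (2 - ρ g) - (2 - ρ g * ρ h) := by noncomm_ring; norm_num [add_comm]
    _ = 0 := by rw [hgh, sub_self]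

end RingValuedHom

section Commutator

variable {G : Type*} [Group G]

lemma isMulCommutative_normalClosure_singleton {x : G} (hx : ∀ g, Commute x (g * x * g⁻¹)) :
    IsMulCommutative (Subgroup.normalClosure {x}) := by
  refine Subgroup.isMulCommutative_closure fun y hy z hz ↦ ?_
  simp only [Group.mem_conjugatesOfSet_iff, Set.mem_singleton_iff, exists_eq_left,
    isConj_iff] at hy hz
  obtain ⟨c, rfl⟩ := hy
  obtain ⟨d, rfl⟩ := hz
  have hcd := (Commute.conj_iff c).mpr (hx (c⁻¹ * d))
  have hconj : c * (c⁻¹ * d * x * (c⁻¹ * d)⁻¹) * c⁻¹ = d * x * d⁻¹ := by group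
  rwa [hconj] at hcd

lemma commutator_mem_of_mem_closure {H : Subgroup G} [H.Normal] {s : Set G} {x g : G}
    (hs : ∀ y ∈ s, ⁅y, x⁆ ∈ H) (hg : g ∈ Subgroup.closure s) : ⁅g, x⁆ ∈ H := by
  induction hg using Subgroup.closure_induction with
  | mem y hy => exact hs y hy
  | one => rw [commutatorElement_one_left]; exact H.one_mem
  | mul y z _ _ hy hz =>
    rw [commutatorElement_mul_left_eq_conj_mul]
    exact H.mul_mem (‹H.Normal›.conj_mem _ hz _) hy
  | inv y _ hy =>
    rw [commutatorElement_inv_left, ← commutatorElement_inv]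
    exact ‹H.Normal›.conj_mem' _ (H.inv_mem hy) _

lemma mem_upperCentralSeries_succ_of_closure_eq_top {s : Set G} (hs : Subgroup.closure s = ⊤)
    {n : ℕ} {x : G} (hx : ∀ g ∈ s, ⁅g, x⁆ ∈ Subgroup.upperCentralSeries G n) :
    x ∈ Subgroup.upperCentralSeries G (n + 1) := by
  refine Subgroup.mem_upperCentralSeries_succ_iff.mpr fun g ↦ ?_
  rw [← commutatorElement_inv, inv_mem_iff]
  exact commutator_mem_of_mem_closure hx (hs ▸ Subgroup.mem_top g)

end Commutator

section ConjugationAction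

variable {G : Type*} [Group G] (N : Subgroup G) [N.Normal] [IsMulCommutative N]

/-- The conjugation action of `G` on an abelian normal subgroup `N`, with `N` written additively so
that the operators `g - 1` make sense. -/
def conjEnd : G →* AddMonoid.End (Additive N) :=
  (monoidEndToAdditive N).toMonoidHom.comp
    ((MulDistribMulAction.toMonoidEnd (MulAut N) N).comp MulAut.conjNormal)

lemma coe_conjEnd_sub_one_apply (g : G) (v : Additive N) :
    (((conjEnd N g - 1) v).toMul : G) = ⁅g, (v.toMul : G)⁆ := by
  change ((MulAut.conjNormal g v.toMul / v.toMul : N) : G) = _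
  rw [Subgroup.coe_div, MulAut.conjNormal_apply, div_eq_mul_inv, commutatorElement_def]

variable {N}

lemma conjEnd_sub_one_sq_eq_zero {g : G} (hg : ∀ v ∈ N, ⁅g, ⁅g, v⁆⁆ = 1) :
    (conjEnd N g - 1) ^ 2 = 0 := by
  refine DFunLike.ext _ _ fun v ↦ Additive.toMul.injective (Subtype.ext ?_)
  rw [sq, AddMonoid.End.coe_mul, Function.comp_apply, coe_conjEnd_sub_one_apply,
    coe_conjEnd_sub_one_apply]
  exact hg _ v.toMul.2

variable (hN : ∀ g : G, ∀ v ∈ N, ⁅g, ⁅g, v⁆⁆ = 1)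
include hN

lemma commutator_commutator_mul_swap_eq_one (g h : G) {v : G} (hv : v ∈ N) :
    ⁅g, ⁅h, v⁆⁆ * ⁅h, ⁅g, v⁆⁆ = 1 := by
  have hanti := sub_one_mul_sub_one_anticomm (fun g ↦ conjEnd_sub_one_sq_eq_zero (hN g)) g h
  let w : Additive N := Additive.ofMul ⟨v, hv⟩
  have happly : (conjEnd N g - 1) ((conjEnd N h - 1) w)
      + (conjEnd N h - 1) ((conjEnd N g - 1) w) = 0 := DFunLike.congr_fun hanti w
  simpa only [toMul_add, Subgroup.coe_mul, coe_conjEnd_sub_one_apply, w, toMul_ofMul, toMul_zero,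
    Subgroup.coe_one] using congrArg (fun u : Additive N ↦ (u.toMul : G)) happly

lemma mem_upperCentralSeries_card_add_one {ι : Type*} {a : ι → G}
    (hgen : Subgroup.closure (Set.range a) = ⊤) (T : Finset ι) {x : G} (hx : x ∈ N)
    (hT : ∀ j ∉ T, ⁅a j, x⁆ = 1) : x ∈ Subgroup.upperCentralSeries G (T.card + 1) := by
  classical
  induction T using Finset.strongInduction generalizing x with
  | H T ih =>
  refine mem_upperCentralSeries_succ_of_closure_eq_top hgen (Set.forall_mem_range.mpr fun t ↦ ?_)
  by_cases ht : t ∈ T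
  · have htx : ⁅a t, x⁆ ∈ N := N.mul_mem (‹N.Normal›.conj_mem x hx _) (N.inv_mem hx)
    have hcomm : ∀ j ∉ T.erase t, ⁅a j, ⁅a t, x⁆⁆ = 1 := fun j hj ↦ by
      obtain rfl | hjt := eq_or_ne j t
      · exact hN _ x hx
      · have hswap := commutator_commutator_mul_swap_eq_one hN (a j) (a t) hx
        have hjT : j ∉ T := fun h ↦ hj (Finset.mem_erase.mpr ⟨hjt, h⟩)
        rwa [hT j hjT, commutatorElement_one_right, mul_one] at hswap
    simpa only [Finset.card_erase_add_one ht] using ih _ (Finset.erase_ssubset ht) htx hcomm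
  · rw [hT t ht]
    exact Subgroup.one_mem _

end ConjugationAction

/-- Semi-`n`-abelian groups: the `n`-th power map detects the relation `(a * b) ^ n = 1` as a
homomorphism would. -/
def IsSemiAbelian (n : ℕ) (G : Type*) [Group G] : Prop :=
  ∀ a b : G, (a * b) ^ n = 1 ↔ a ^ n * b ^ n = 1

namespace IsSemiAbelian

variable {G : Type*} [Group G]

section

variable {n : ℕ} (hG : IsSemiAbelian n G)
include hG

lemma mul_inv_pow_eq_one_iff (a b : G) : (a * b⁻¹) ^ n = 1 ↔ a ^ n = b ^ n := by
  rw [hG, inv_pow, mul_inv_eq_one]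

lemma mul_pow_eq_of_pow_eq_one {x : G} (hx : x ^ n = 1) (g : G) : (x * g) ^ n = g ^ n := by
  rw [← hG.mul_inv_pow_eq_one_iff, mul_inv_cancel_right, hx]

/-- The elements of order dividing `n`, which form a subgroup of a semi-`n`-abelian group; for
`n = 3` this is `Ω₁(G)`. -/
def powEqOne : Subgroup G where
  carrier := {g | g ^ n = 1}
  one_mem' := one_pow n
  mul_mem' hx hy := (hG.mul_pow_eq_of_pow_eq_one hx _).trans hy
  inv_mem' hx := by rw [Set.mem_ofPred_eq, inv_pow, hx, inv_one]

instance : hG.powEqOne.Normal where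
  conj_mem x hx g := by
    change (g * x * g⁻¹) ^ n = 1
    rw [conj_pow, hx, mul_one, mul_inv_cancel]

lemma pow_eq_one_of_mem_closure {x : G} (hx : x ∈ Subgroup.closure {g : G | g ^ n = 1}) :
    x ^ n = 1 :=
  (Subgroup.closure_le hG.powEqOne).mpr subset_rfl hx

lemma pow_eq_one_of_mem_normalClosure {x y : G} (hx : x ^ n = 1)
    (hy : y ∈ Subgroup.normalClosure {x}) : y ^ n = 1 :=
  Subgroup.normalClosure_le_normal (N := hG.powEqOne) (Set.singleton_subset_iff.mpr hx) hy

end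

variable (hG : IsSemiAbelian 3 G)
include hG

lemma mul_conj_mul_conj_conj_eq_one {x : G} (hx : x ^ 3 = 1) (g : G) :
    x * (g * x * g⁻¹) * (g * (g * x * g⁻¹) * g⁻¹) = 1 :=
  calc x * (g * x * g⁻¹) * (g * (g * x * g⁻¹) * g⁻¹)
      = (x * g) ^ 3 * (g ^ 3)⁻¹ := by simp only [pow_succ, pow_zero]; group
    _ = 1 := by rw [hG.mul_pow_eq_of_pow_eq_one hx, mul_inv_cancel]

lemma commute_conj {x : G} (hx : x ^ 3 = 1) (g : G) : Commute x (g * x * g⁻¹) := by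
  set y := g * x * g⁻¹ with hy
  set z := g * y * g⁻¹ with hz
  have hz3 : z ^ 3 = 1 := by simp only [hz, hy, conj_pow, hx, mul_one, mul_inv_cancel]
  have hxyz : x * y * z = 1 := hG.mul_conj_mul_conj_conj_eq_one hx g
  have hzyx : z * (y * x) = 1 := by
    have hyz : g⁻¹ * z * g⁻¹⁻¹ = y := by rw [hz]; group
    have hxy : g⁻¹ * y * g⁻¹⁻¹ = x := by rw [hy]; group
    simpa only [hyz, hxy, mul_assoc] using hG.mul_conj_mul_conj_conj_eq_one hz3 g⁻¹
  exact (eq_inv_of_mul_eq_one_left hxyz).trans (eq_inv_of_mul_eq_one_right hzyx).symm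

lemma commutator_commutator_self_eq_one {x : G} (hx : x ^ 3 = 1) (g : G) : ⁅g, ⁅g, x⁆⁆ = 1 := by
  obtain ⟨y, hy⟩ : ∃ y, y = g * x * g⁻¹ := ⟨_, rfl⟩
  have hy3 : y ^ 3 = 1 := by rw [hy, conj_pow, hx, mul_one, mul_inv_cancel]
  have hxy : Commute x y := hy ▸ hG.commute_conj hx g
  have hz : g * y * g⁻¹ = y⁻¹ * x⁻¹ := by
    rw [← mul_inv_rev, hy]
    exact eq_inv_of_mul_eq_one_right (hG.mul_conj_mul_conj_conj_eq_one hx g)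
  calc ⁅g, ⁅g, x⁆⁆ = g * y * g⁻¹ * y⁻¹ * x * y⁻¹ := by
        simp only [hy, commutatorElement_def]; group
    _ = y⁻¹ * x⁻¹ * (y⁻¹ * x) * y⁻¹ := by rw [hz]; group
    _ = (y ^ 3)⁻¹ := by rw [← hxy.inv_right.eq]; group
    _ = 1 := by rw [hy3, inv_one]

end IsSemiAbelian

theorem semi3abelian_generator_power_in_Zn_general {G ι : Type*} [Group G] [Fintype ι]
    (hG : IsSemiAbelian 3 G) {a : ι → G} (hgen : Subgroup.closure (Set.range a) = ⊤) {i : ι} {x : G}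
    (hcomm : Commute (a i) x) (hx : x ∈ Subgroup.closure {g : G | g ^ 3 = 1}) :
    x ∈ Subgroup.upperCentralSeries G (Fintype.card ι) := by
  classical
  have hx3 : x ^ 3 = 1 := hG.pow_eq_one_of_mem_closure hx
  have := isMulCommutative_normalClosure_singleton (hG.commute_conj hx3)
  have hEngel : ∀ g, ∀ v ∈ Subgroup.normalClosure {x}, ⁅g, ⁅g, v⁆⁆ = 1 := fun g v hv ↦
    hG.commutator_commutator_self_eq_one (hG.pow_eq_one_of_mem_normalClosure hx3 hv) g
  have hi : ∀ j ∉ Finset.univ.erase i, ⁅a j, x⁆ = 1 := fun j hj ↦ by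
    obtain rfl : j = i := by simpa using hj
    exact commutatorElement_eq_one_iff_commute.mpr hcomm
  have hmem := mem_upperCentralSeries_card_add_one hEngel hgen _
    (Subgroup.subset_normalClosure (Set.mem_singleton x)) hi
  rwa [Finset.card_erase_add_one (Finset.mem_univ i), Finset.card_univ] at hmem

/-- In a finite semi-3-abelian 3-group generated by `n` elements `a₁, …, a_n` with
`|G/Φ(G)| = 3^n`, if `x = a_i ^ m` lies in `Ω₁(G)` then `x ∈ Z_n(G)`. -/
theorem semi3abelian_generator_power_in_Zn (G : Type*) [Group G] [Finite G]
    (hG : IsPGroup 3 G)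
    (hsemi : ∀ a b : G, (a * b) ^ 3 = 1 ↔ a ^ 3 * b ^ 3 = 1)
    (n : ℕ) (a : Fin n → G) (hgen : Subgroup.closure (Set.range a) = ⊤)
    (hcard : Nat.card (G ⧸ frattini G) = 3 ^ n)
    (i : Fin n) (m : ℕ) (x : G) (hxm : x = a i ^ m)
    (hx : x ∈ Subgroup.closure {g : G | g ^ 3 = 1}) :
    x ∈ upperCentralSeries G n := by
  have hcomm : Commute (a i) x := hxm ▸ Commute.self_pow (a i) m
  exact Fintype.card_fin n ▸ semi3abelian_generator_power_in_Zn_general hsemi hgen hcomm hx
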